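/- arXiv:2209.12989 — 2 statements merged into one kernel-verified Lean document; each statement's English description precedes it below -/
import Mathlib

section
/- Let (X,𝔸,μ) be a measure space, τ : X → X a non-singular measurable transformation, φ an Orlicz function satisfying the Δ₂-condition for all s > 0, and h a weight function. If there exists a measurable set A ∈ 𝔸 with 0 < μ(A) < ∞ such that limsup_{n→∞} φ⁻¹(1/∫₀^{μ(τ⁻ⁿ(A))} h(t) dt) = ∞, then the characteristic function g = χ_A belongs to L^{φ,h}(μ), g ≠ 0, and liminf_{n→∞} ‖C_τⁿ g‖_{φ,h} = 0. -/
/-!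
The rearrangement of a characteristic function `χ_B` is `χ_[0, μ B)`, and `φ 0 = 0`, so its modular
is explicit (`olModular_indicator`): `I_{φ,h}(c χ_B) = φ(c) ∫₀^{μ B} h`. For `B = A`, local
integrability of `h` and finiteness of `φ` at some positive `c` give `χ_A ∈ L^{φ,h}`.

For `B = τ⁻ⁿ A`, of which `C_τⁿ χ_A` is the characteristic function, every finite `s > 0` with
`φ(s) ≤ 1 / ∫₀^{μ B} h` satisfies `I_{φ,h}(s χ_B) ≤ 1`, i.e. `‖χ_B‖ ≤ 1 / s`
(`olNorm_indicator_le`). The infinite limsup provides arbitrarily large such `s` for infinitely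
many `n`, hence norms arbitrarily close to `0`.
-/

open MeasureTheory Filter Set
open scoped ENNReal NNReal

noncomputable section

/-- The generalized inverse `φ⁻¹(u) = sup {s ≥ 0 : φ(s) ≤ u}` of an Orlicz function. -/
def orliczInv (φ : ℝ≥0∞ → ℝ≥0∞) (u : ℝ≥0∞) : ℝ≥0∞ :=
  ⨆ (s : ℝ≥0) (_ : φ (s : ℝ≥0∞) ≤ u), (s : ℝ≥0∞)

/-- An Orlicz function: convex on `[0,∞)` (viewed inside `ℝ≥0∞`), vanishing at `0`,
tending to `∞` at `∞`, and finite at some positive point. -/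
structure IsOrliczFunction (φ : ℝ≥0∞ → ℝ≥0∞) : Prop where
  map_zero : φ 0 = 0
  convex : ∀ (x y a b : ℝ≥0), a + b = 1 →
    φ ((a * x + b * y : ℝ≥0) : ℝ≥0∞) ≤ (a : ℝ≥0∞) * φ (x : ℝ≥0∞) + (b : ℝ≥0∞) * φ (y : ℝ≥0∞)
  tendsto_top : Filter.Tendsto (fun s : ℝ≥0 => φ (s : ℝ≥0∞)) Filter.atTop (nhds ⊤)
  exists_pos_finite : ∃ s : ℝ≥0, 0 < s ∧ φ (s : ℝ≥0∞) < ⊤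

/-- The Δ₂-condition for all `s > 0`: `φ(2s) ≤ M φ(s)` for some constant `M > 0`. -/
def Delta2All (φ : ℝ≥0∞ → ℝ≥0∞) : Prop :=
  ∃ M : ℝ≥0, 0 < M ∧ ∀ s : ℝ≥0, 0 < s →
    φ ((2 * s : ℝ≥0) : ℝ≥0∞) ≤ (M : ℝ≥0∞) * φ (s : ℝ≥0∞)

variable {X : Type*}

/-- A weight function on `K = [0, μ(X)]`: measurable, positive, finite,
non-increasing and locally integrable on `K`. -/
structure IsWeight [MeasurableSpace X] (μ : Measure X) (h : ℝ → ℝ≥0∞) : Prop where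
  measurable : Measurable h
  pos : ∀ t : ℝ, 0 ≤ t → ENNReal.ofReal t ≤ μ Set.univ → 0 < h t
  lt_top : ∀ t : ℝ, 0 ≤ t → ENNReal.ofReal t ≤ μ Set.univ → h t < ⊤
  antitone : ∀ s t : ℝ, 0 ≤ s → s ≤ t → ENNReal.ofReal t ≤ μ Set.univ → h t ≤ h s
  locally_integrable : ∀ c : ℝ, 0 ≤ c → ENNReal.ofReal c ≤ μ Set.univ →
    (∫⁻ t in Set.Ioc (0 : ℝ) c, h t) < ⊤

/-- `∫₀^c h(t) dt`, for an extended-real upper limit `c`. -/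
def weightInt (h : ℝ → ℝ≥0∞) (c : ℝ≥0∞) : ℝ≥0∞ :=
  ∫⁻ t in {t : ℝ | 0 < t ∧ ENNReal.ofReal t < c}, h t

/-- The non-increasing rearrangement `g*(t) = inf {λ : μ(|g| > λ) ≤ t}`. -/
def decRearr [MeasurableSpace X] (μ : Measure X) (g : X → ℝ) (t : ℝ) : ℝ≥0∞ :=
  sInf {l : ℝ≥0∞ | μ {x | l < ENNReal.ofReal |g x|} ≤ ENNReal.ofReal t}

/-- The Orlicz–Lorentz modular `I_{φ,h}(c·g) = ∫_K φ(c g*(t)) h(t) dt`, `K = [0, μ(X)]`. -/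
def olModular [MeasurableSpace X] (φ : ℝ≥0∞ → ℝ≥0∞) (h : ℝ → ℝ≥0∞) (μ : Measure X)
    (g : X → ℝ) (c : ℝ≥0∞) : ℝ≥0∞ :=
  ∫⁻ t in {t : ℝ | 0 < t ∧ ENNReal.ofReal t < μ Set.univ}, φ (c * decRearr μ g t) * h t

/-- The Orlicz–Lorentz (Luxemburg) norm `‖g‖_{φ,h} = inf {λ > 0 : I_{φ,h}(g/λ) ≤ 1}`. -/
def olNorm [MeasurableSpace X] (φ : ℝ≥0∞ → ℝ≥0∞) (h : ℝ → ℝ≥0∞) (μ : Measure X)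
    (g : X → ℝ) : ℝ≥0∞ :=
  sInf {l : ℝ≥0∞ | 0 < l ∧ olModular φ h μ g l⁻¹ ≤ 1}

/-- Membership in the Orlicz–Lorentz space `L^{φ,h}(μ)`. -/
def MemOL [MeasurableSpace X] (φ : ℝ≥0∞ → ℝ≥0∞) (h : ℝ → ℝ≥0∞) (μ : Measure X)
    (g : X → ℝ) : Prop :=
  AEMeasurable g μ ∧ ∃ c : ℝ≥0, 0 < c ∧ olModular φ h μ g (c : ℝ≥0∞) < ⊤

/-- A non-singular measurable transformation: `μ(A) = 0 → μ(τ⁻¹(A)) = 0`. -/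
def NonSingular [MeasurableSpace X] (μ : Measure X) (τ : X → X) : Prop :=
  Measurable τ ∧ ∀ A : Set X, MeasurableSet A → μ A = 0 → μ (τ ⁻¹' A) = 0

/-- The composition operator `C_τ g = g ∘ τ` is a bounded linear operator on `L^{φ,h}(μ)`. -/
def CompBoundedOL [MeasurableSpace X] (φ : ℝ≥0∞ → ℝ≥0∞) (h : ℝ → ℝ≥0∞) (μ : Measure X)
    (τ : X → X) : Prop :=
  (∀ g : X → ℝ, MemOL φ h μ g → MemOL φ h μ (g ∘ τ)) ∧
  ∃ M : ℝ≥0∞, M < ⊤ ∧ ∀ g : X → ℝ, MemOL φ h μ g →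
    olNorm φ h μ (g ∘ τ) ≤ M * olNorm φ h μ g

/-- `C_τ` is Li-Yorke chaotic on `L^{φ,h}(μ)`: there is an uncountable set `S` of
(representatives of pairwise distinct) points of `L^{φ,h}(μ)` such that every pair of
distinct points of `S` is a Li-Yorke pair for `C_τ`. -/
def LiYorkeOL [MeasurableSpace X] (φ : ℝ≥0∞ → ℝ≥0∞) (h : ℝ → ℝ≥0∞) (μ : Measure X)
    (τ : X → X) : Prop :=
  ∃ S : Set (X → ℝ),
    (∀ g ∈ S, MemOL φ h μ g) ∧
    ¬ S.Countable ∧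
    (∀ p ∈ S, ∀ q ∈ S, p ≠ q → ¬ p =ᵐ[μ] q) ∧
    ∀ p ∈ S, ∀ q ∈ S, p ≠ q →
      Filter.liminf (fun n : ℕ => olNorm φ h μ ((p - q) ∘ τ^[n])) Filter.atTop = 0 ∧
      0 < Filter.limsup (fun n : ℕ => olNorm φ h μ ((p - q) ∘ τ^[n])) Filter.atTop

/-- `g` is a semi-irregular vector for `C_τ` on `L^{φ,h}(μ)`. -/
def SemiIrregularOL [MeasurableSpace X] (φ : ℝ≥0∞ → ℝ≥0∞) (h : ℝ → ℝ≥0∞) (μ : Measure X)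
    (τ : X → X) (g : X → ℝ) : Prop :=
  MemOL φ h μ g ∧
  Filter.liminf (fun n : ℕ => olNorm φ h μ (g ∘ τ^[n])) Filter.atTop = 0 ∧
  0 < Filter.limsup (fun n : ℕ => olNorm φ h μ (g ∘ τ^[n])) Filter.atTop

/-- The non-increasing rearrangement of `χ_B` is `χ_[0, μ B)`. No measurability of `B` is needed,
since only superlevel sets of `χ_B` enter. -/
lemma decRearr_indicator [MeasurableSpace X] (μ : Measure X) (B : Set X) (t : ℝ) :
    decRearr μ (B.indicator fun _ => (1 : ℝ)) t =
      {t : ℝ | ENNReal.ofReal t < μ B}.indicator (fun _ => (1 : ℝ≥0∞)) t := by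
  classical
  have hlt : ∀ l : ℝ≥0∞, l < 1 →
      {x | l < ENNReal.ofReal |B.indicator (fun _ => (1 : ℝ)) x|} = B := by
    intro l hl
    ext x
    by_cases hx : x ∈ B <;> simp [hx, hl]
  have hge : ∀ l : ℝ≥0∞, 1 ≤ l →
      {x | l < ENNReal.ofReal |B.indicator (fun _ => (1 : ℝ)) x|} = ∅ := by
    intro l hl
    ext x
    by_cases hx : x ∈ B <;> simp [hx, hl]
  unfold decRearr
  by_cases ht : ENNReal.ofReal t < μ B
  · rw [Set.indicator_of_mem (by exact ht)]
    apply le_antisymm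
    · apply sInf_le
      simp only [Set.mem_ofPred_eq]
      rw [hge 1 le_rfl]
      simp
    · apply le_sInf
      intro l hl
      by_contra! hl1
      simp only [Set.mem_ofPred_eq] at hl
      rw [hlt l hl1] at hl
      exact absurd ht (not_lt.mpr hl)
  · rw [Set.indicator_of_notMem (by exact ht)]
    refine le_antisymm (sInf_le ?_) bot_le
    simp only [Set.mem_ofPred_eq]
    rw [hlt 0 one_pos]
    exact not_lt.mp ht

/-- `I_{φ,h}(c χ_B) = φ(c) ∫₀^{μ B} h(t) dt`. -/
lemma olModular_indicator [MeasurableSpace X] {μ : Measure X} {φ : ℝ≥0∞ → ℝ≥0∞}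
    {h : ℝ → ℝ≥0∞} (hφ : φ 0 = 0) (hh : Measurable h) (B : Set X) (c : ℝ≥0∞) :
    olModular φ h μ (B.indicator fun _ => (1 : ℝ)) c = φ c * weightInt h (μ B) := by
  have hmeas : ∀ b : ℝ≥0∞, MeasurableSet {t : ℝ | 0 < t ∧ ENNReal.ofReal t < b} := fun b =>
    (measurableSet_lt measurable_const measurable_id).inter
      (measurableSet_lt ENNReal.measurable_ofReal measurable_const)
  unfold olModular weightInt
  rw [← lintegral_const_mul _ hh, ← lintegral_indicator (hmeas _),
    ← lintegral_indicator (hmeas _)]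
  refine lintegral_congr fun t => ?_
  simp only [decRearr_indicator]
  by_cases ht : ENNReal.ofReal t < μ B
  · have ht' : ENNReal.ofReal t < μ Set.univ := ht.trans_le (measure_mono (Set.subset_univ B))
    simp [Set.indicator_apply, ht, ht']
  · simp [Set.indicator_apply, ht, hφ]

lemma weightInt_lt_top [MeasurableSpace X] {μ : Measure X} {h : ℝ → ℝ≥0∞} (hh : IsWeight μ h)
    {B : Set X} (hB : μ B < ⊤) : weightInt h (μ B) < ⊤ := by
  have hle : ENNReal.ofReal (μ B).toReal ≤ μ Set.univ := by
    rw [ENNReal.ofReal_toReal hB.ne]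
    exact measure_mono (Set.subset_univ B)
  refine lt_of_le_of_lt ?_ (hh.locally_integrable _ ENNReal.toReal_nonneg hle)
  refine lintegral_mono_set fun t ht => ⟨ht.1, ?_⟩
  exact (ENNReal.ofReal_le_iff_le_toReal hB.ne).mp ht.2.le

/-- Only an admissible `s` in the supremum defining `φ⁻¹` is used, so the bound holds whether or
not that supremum is attained, and also when `∫₀^{μ B} h` is `0` or `∞`. -/
lemma olNorm_indicator_le [MeasurableSpace X] {μ : Measure X} {φ : ℝ≥0∞ → ℝ≥0∞}
    {h : ℝ → ℝ≥0∞} (hφ : φ 0 = 0) (hh : Measurable h) (B : Set X) {s : ℝ≥0}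
    (hs : φ s ≤ (weightInt h (μ B))⁻¹) :
    olNorm φ h μ (B.indicator fun _ => (1 : ℝ)) ≤ (s : ℝ≥0∞)⁻¹ := by
  refine sInf_le ⟨ENNReal.inv_pos.mpr ENNReal.coe_ne_top, ?_⟩
  rw [inv_inv, olModular_indicator hφ hh]
  exact (mul_le_mul_left hs _).trans (ENNReal.inv_mul_le_one _)

/-- If `limsup φ⁻¹(1/∫₀^{μ(τ⁻ⁿ A)} h) = ∞` for a set `A` of finite positive measure,
then `χ_A` is a nonzero element of `L^{φ,h}(μ)` with `liminf ‖C_τⁿ χ_A‖ = 0`. -/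
theorem stmt_6 {X : Type*} [MeasurableSpace X] (μ : Measure X) (τ : X → X)
    (φ : ℝ≥0∞ → ℝ≥0∞) (h : ℝ → ℝ≥0∞)
    (hτ : NonSingular μ τ) (hφ : IsOrliczFunction φ) (hΔ : Delta2All φ)
    (hh : IsWeight μ h)
    (A : Set X) (hA : MeasurableSet A) (hA0 : 0 < μ A) (hAfin : μ A < ⊤)
    (hlim : Filter.limsup
        (fun n : ℕ => orliczInv φ (weightInt h (μ ((τ^[n]) ⁻¹' A)))⁻¹)
        Filter.atTop = ⊤) :
    MemOL φ h μ (A.indicator fun _ => (1 : ℝ)) ∧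
    ¬ (A.indicator fun _ => (1 : ℝ)) =ᵐ[μ] (0 : X → ℝ) ∧
    Filter.liminf
      (fun n : ℕ => olNorm φ h μ ((A.indicator fun _ => (1 : ℝ)) ∘ τ^[n]))
      Filter.atTop = 0 := by
  refine ⟨⟨(measurable_const.indicator hA).aemeasurable, ?_⟩, ?_, ?_⟩
  · obtain ⟨s, hs0, hs⟩ := hφ.exists_pos_finite
    refine ⟨s, hs0, ?_⟩
    rw [olModular_indicator hφ.map_zero hh.measurable]
    exact ENNReal.mul_lt_top hs (weightInt_lt_top hh hAfin)
  · intro h0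
    refine hA0.ne' (measure_mono_null (fun x hx => ?_) h0)
    simp [hx]
  · refine le_antisymm (le_of_forall_gt fun ε hε => ?_) bot_le
    obtain ⟨δ, hδ0, hδ⟩ := exists_between hε
    refine lt_of_le_of_lt (liminf_le_of_frequently_le' ?_) hδ
    have hfreq := frequently_lt_of_lt_limsup (b := δ⁻¹) (by isBoundedDefault)
      (by rw [hlim]; exact ENNReal.inv_lt_top.mpr hδ0)
    refine hfreq.mono fun n hn => ?_
    simp only [orliczInv, lt_iSup_iff] at hn
    obtain ⟨s, hs, hlt⟩ := hn
    have hcomp : (A.indicator fun _ => (1 : ℝ)) ∘ τ^[n] =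
        (τ^[n] ⁻¹' A).indicator fun _ => (1 : ℝ) := rfl
    rw [hcomp]
    exact (olNorm_indicator_le hφ.map_zero hh.measurable _ hs).trans
      (ENNReal.inv_le_iff_inv_le.mp hlt.le)

end
end

section
/- Let (X,𝔸,μ) be a finite measure space, τ : X → X an injective non-singular measurable transformation mapping measurable sets to measurable sets, φ an Orlicz function satisfying the Δ₂-condition for all s > 0, and h a weight function. If there exists a measurable set A ∈ 𝔸 with 0 < μ(A) < ∞ such that limsup_{n→∞} φ⁻¹(1/∫₀^{μ(τ⁻ⁿ(A))} h(t) dt) = ∞, then there exists a measurable set B ∈ 𝔸 with 0 < μ(B) < ∞ such that limsup_{n→∞} φ⁻¹(1/∫₀^{μ(τⁿ(B))} h(t) dt) = ∞, where τⁿ(B) denotes the forward image of B under the n-fold iterate of τ. -/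
/-!
The function `u ↦ φ⁻¹(1 / ∫₀ᵘ h)` is finite for `u > 0` (since `h > 0` and `φ → ∞`) and blows up as
`u → 0` (since `h` is integrable near `0`, and the Δ₂-condition makes `φ` finite everywhere). So the
two limsup conditions say that `μ (τ⁻ⁿ A)`, respectively `μ (τⁿ B)`, is arbitrarily small along a
subsequence.

Suppose `liminf μ (τ⁻ⁿ A) = 0`. As in the Hajian–Kakutani construction of weakly wandering sets, one
builds integers `n₀ < n₁ < ⋯` such that the sets `τ^{-(nⱼ - nᵢ)} A`, `i < j`, have total measure less
than `μ A`: given `n₀, …, nⱼ`, pick `a` with `μ (τ⁻ᵃ A)` so small that, by the absolute continuity of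
`μ ∘ τ⁻ˢ` with respect to `μ` for the finitely many `s ≤ nⱼ`, all `μ (τ^{-(a+s)} A)` are small, and put
`nⱼ₊₁ = nⱼ + a`. Removing these sets from `A` leaves `B` of positive measure with
`τ^{nⱼ-nᵢ} B ∩ B = ∅` for `i < j`. Injectivity of `τ` makes the sets `τ^{nᵢ} B` pairwise disjoint, and
as `μ` is finite, `μ (τ^{nᵢ} B) → 0`.
-/


open MeasureTheory Filter Set
open scoped ENNReal NNReal

noncomputable section

variable {X : Type*}

lemma orliczInv_mono (φ : ℝ≥0∞ → ℝ≥0∞) {u v : ℝ≥0∞} (huv : u ≤ v) :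
    orliczInv φ u ≤ orliczInv φ v :=
  iSup_mono fun _ => iSup_le fun hs => le_iSup_of_le (hs.trans huv) le_rfl

lemma orliczInv_lt_top {φ : ℝ≥0∞ → ℝ≥0∞} (hφ : IsOrliczFunction φ) {u : ℝ≥0∞} (hu : u < ⊤) :
    orliczInv φ u < ⊤ := by
  obtain ⟨S, hS⟩ := eventually_atTop.1 (hφ.tendsto_top.eventually (lt_mem_nhds hu))
  refine lt_of_le_of_lt (b := (S : ℝ≥0∞)) ?_ ENNReal.coe_lt_top
  refine iSup_le fun s => iSup_le fun hs => ?_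
  by_contra hlt
  exact absurd (hS s (by exact_mod_cast (not_le.1 hlt).le)) (not_lt.2 hs)

/-- Δ₂ propagates finiteness from one positive point to the points `2ᵏ s`, and convexity fills in the
points between them. -/
lemma IsOrliczFunction.lt_top {φ : ℝ≥0∞ → ℝ≥0∞} (hφ : IsOrliczFunction φ) (hΔ : Delta2All φ)
    (s : ℝ≥0) : φ s < ⊤ := by
  obtain ⟨s₀, hs₀, hfin⟩ := hφ.exists_pos_finite
  obtain ⟨M, -, hM⟩ := hΔ
  have hpow : ∀ k : ℕ, φ ((2 ^ k * s₀ : ℝ≥0) : ℝ≥0∞) < ⊤ := by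
    intro k
    induction k with
    | zero => simpa using hfin
    | succ k ih =>
      have := hM (2 ^ k * s₀) (by positivity)
      rw [← mul_assoc, ← pow_succ'] at this
      exact this.trans_lt (ENNReal.mul_lt_top ENNReal.coe_lt_top ih)
  obtain ⟨k, hk⟩ := pow_unbounded_of_one_lt (s / s₀) (one_lt_two : (1 : ℝ≥0) < 2)
  set T : ℝ≥0 := 2 ^ k * s₀ with hT
  have hTpos : 0 < T := by positivity
  have hsT : s ≤ T := ((div_lt_iff₀ hs₀).1 hk).le
  have hconv := hφ.convex T 0 (s / T) (1 - s / T)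
    (add_tsub_cancel_of_le ((div_le_one hTpos).2 hsT))
  rw [mul_zero, add_zero, div_mul_cancel₀ _ hTpos.ne', ENNReal.coe_zero, hφ.map_zero, mul_zero,
    add_zero] at hconv
  exact hconv.trans_lt (ENNReal.mul_lt_top ENNReal.coe_lt_top (hpow k))

lemma weightInt_mono (h : ℝ → ℝ≥0∞) {c d : ℝ≥0∞} (hcd : c ≤ d) :
    weightInt h c ≤ weightInt h d :=
  lintegral_mono_set fun _ ht => ⟨ht.1, ht.2.trans_le hcd⟩

lemma weightInt_pos [MeasurableSpace X] {μ : Measure X} {h : ℝ → ℝ≥0∞} (hh : IsWeight μ h)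
    {c : ℝ≥0∞} (hc : 0 < c) (hcμ : c ≤ μ univ) : 0 < weightInt h c := by
  obtain ⟨d, hd0, hdc⟩ := ENNReal.lt_iff_exists_nnreal_btwn.1 hc
  have hd0' : (0 : ℝ) < d := by exact_mod_cast hd0
  have hsub : Ioo (0 : ℝ) d ⊆ {t : ℝ | 0 < t ∧ ENNReal.ofReal t < c} := fun t ht => by
    refine ⟨ht.1, lt_of_le_of_lt ?_ hdc⟩
    rw [← ENNReal.ofReal_coe_nnreal]
    exact ENNReal.ofReal_le_ofReal ht.2.le
  refine lt_of_lt_of_le ?_ (lintegral_mono_set hsub)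
  rw [setLIntegral_pos_iff hh.measurable]
  have : Ioo (0 : ℝ) d ⊆ Function.support h ∩ Ioo (0 : ℝ) d := fun t ht =>
    ⟨(hh.pos t ht.1.le ((hsub ht).2.le.trans hcμ)).ne', ht⟩
  refine lt_of_lt_of_le ?_ (measure_mono this)
  simpa using hd0'

lemma tendsto_weightInt [MeasurableSpace X] {μ : Measure X} [IsFiniteMeasure μ] {h : ℝ → ℝ≥0∞}
    (hh : IsWeight μ h) {c : ℕ → ℝ≥0∞} (hcμ : ∀ n, c n ≤ μ univ) (hc : Tendsto c atTop (nhds 0)) :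
    Tendsto (fun n => weightInt h (c n)) atTop (nhds 0) := by
  set m : ℝ := (μ univ).toReal
  have hm : ENNReal.ofReal m = μ univ := ENNReal.ofReal_toReal (measure_ne_top μ univ)
  have hint : ∫⁻ t in Ioc (0 : ℝ) m, h t ≠ ⊤ :=
    (hh.locally_integrable m ENNReal.toReal_nonneg hm.le).ne
  have hfin : ∀ n, c n ≠ ⊤ := fun n => ((hcμ n).trans_lt (measure_lt_top μ univ)).ne
  have hset : ∀ n, {t : ℝ | 0 < t ∧ ENNReal.ofReal t < c n} = Ioo 0 (c n).toReal := by
    intro n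
    ext t
    constructor
    · exact fun ht => ⟨ht.1, (ENNReal.ofReal_lt_iff_lt_toReal ht.1.le (hfin n)).1 ht.2⟩
    · exact fun ht => ⟨ht.1, (ENNReal.ofReal_lt_iff_lt_toReal ht.1.le (hfin n)).2 ht.2⟩
  have hsub : ∀ n, Ioo 0 (c n).toReal ⊆ Ioc (0 : ℝ) m := fun n t ht =>
    ⟨ht.1, ht.2.le.trans (ENNReal.toReal_mono (measure_ne_top μ univ) (hcμ n))⟩
  have key : Tendsto (fun n => ∫⁻ t in Ioo 0 (c n).toReal, h t ∂(volume.restrict (Ioc (0 : ℝ) m)))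
      atTop (nhds 0) := by
    refine tendsto_setLIntegral_zero hint ?_
    refine hc.congr fun n => ?_
    rw [Function.comp_apply, Measure.restrict_apply measurableSet_Ioo,
      inter_eq_self_of_subset_left (hsub n), Real.volume_Ioo, sub_zero,
      ENNReal.ofReal_toReal (hfin n)]
  refine key.congr fun n => ?_
  rw [weightInt, hset, Measure.restrict_restrict measurableSet_Ioo,
    inter_eq_self_of_subset_left (hsub n)]

/-- If `φ⁻¹(1 / ∫₀^{c n} h)` is unbounded, `c n` comes arbitrarily close to `0`: where `c n ≥ δ`, the
values are at most the finite number `φ⁻¹(1 / ∫₀^δ h)`. -/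
lemma exists_small_of_limsup [MeasurableSpace X] {μ : Measure X} {φ : ℝ≥0∞ → ℝ≥0∞}
    {h : ℝ → ℝ≥0∞} (hφ : IsOrliczFunction φ) (hh : IsWeight μ h) {c : ℕ → ℝ≥0∞}
    (hcμ : ∀ n, c n ≤ μ univ)
    (hlim : limsup (fun n => orliczInv φ (weightInt h (c n))⁻¹) atTop = ⊤)
    {δ : ℝ≥0∞} (hδ : 0 < δ) : ∃ᶠ n in atTop, c n < δ := by
  by_contra hnot
  have hev : ∀ᶠ n in atTop, δ ≤ c n := by simpa [Filter.Frequently] using hnot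
  obtain ⟨n, hn⟩ := hev.exists
  have hpos := weightInt_pos hh hδ (hn.trans (hcμ n))
  refine (lt_irrefl (⊤ : ℝ≥0∞)) (lt_of_le_of_lt ?_
    (orliczInv_lt_top hφ (ENNReal.inv_lt_top.2 hpos)))
  rw [← hlim]
  refine limsup_le_of_le (by isBoundedDefault) (hev.mono fun k hk => ?_)
  exact orliczInv_mono φ (ENNReal.inv_le_inv.2 (weightInt_mono h hk))

/-- The converse: if `c` tends to `0` along a subsequence, then `1 / ∫₀^{c n} h` eventually exceeds
each of the finite values `φ s` along it. -/
lemma limsup_eq_top_of_subseq [MeasurableSpace X] {μ : Measure X} [IsFiniteMeasure μ]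
    {φ : ℝ≥0∞ → ℝ≥0∞} {h : ℝ → ℝ≥0∞} (hφ : IsOrliczFunction φ) (hΔ : Delta2All φ)
    (hh : IsWeight μ h) {c : ℕ → ℝ≥0∞} (hcμ : ∀ n, c n ≤ μ univ) {n : ℕ → ℕ} (hn : StrictMono n)
    (hc : Tendsto (fun j => c (n j)) atTop (nhds 0)) :
    limsup (fun k => orliczInv φ (weightInt h (c k))⁻¹) atTop = ⊤ := by
  refine ENNReal.eq_top_of_forall_nnreal_le fun s => ?_
  refine le_limsup_of_frequently_le ?_ (by isBoundedDefault)
  have h1 : ∀ᶠ j in atTop, weightInt h (c (n j)) < (φ s)⁻¹ :=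
    (tendsto_weightInt hh (fun j => hcμ (n j)) hc).eventually
      (gt_mem_nhds (ENNReal.inv_pos.2 (hφ.lt_top hΔ s).ne))
  refine hn.tendsto_atTop.frequently (h1.frequently.mono fun j hj => ?_)
  exact le_iSup₂_of_le s (ENNReal.le_inv_iff_le_inv.1 hj.le) le_rfl

lemma NonSingular.iterate [MeasurableSpace X] {μ : Measure X} {τ : X → X} (hτ : NonSingular μ τ)
    (s : ℕ) : NonSingular μ τ^[s] := by
  induction s with
  | zero => exact ⟨measurable_id, fun _ _ h0 => h0⟩
  | succ s ih =>
    refine ⟨hτ.1.iterate _, fun A hA h0 => ?_⟩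
    rw [Function.iterate_succ', preimage_comp]
    exact ih.2 _ (hτ.1 hA) (hτ.2 A hA h0)

/-- The ε–δ form of the absolute continuity of `∑ s ≤ N, μ ∘ τ⁻ˢ` with respect to `μ`. -/
lemma exists_delta [MeasurableSpace X] {μ : Measure X} [IsFiniteMeasure μ] {τ : X → X}
    (hτ : NonSingular μ τ) (N : ℕ) {ε : ℝ≥0∞} (hε : 0 < ε) :
    ∃ δ > 0, ∀ E : Set X, MeasurableSet E → μ E < δ →
      μ (⋃ s ∈ Finset.range (N + 1), τ^[s] ⁻¹' E) < ε := by
  set ν : Measure X := ∑ s ∈ Finset.range (N + 1), μ.map τ^[s] with hν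
  have hνE : ∀ E, MeasurableSet E → ν E = ∑ s ∈ Finset.range (N + 1), μ (τ^[s] ⁻¹' E) := by
    intro E hE
    rw [hν, Measure.finsetSum_apply]
    exact Finset.sum_congr rfl fun s _ => Measure.map_apply (hτ.1.iterate s) hE
  have : IsFiniteMeasure ν :=
    ⟨by rw [hνE _ MeasurableSet.univ]; exact ENNReal.sum_lt_top.2 fun s _ => measure_lt_top _ _⟩
  have hac : ν ≪ μ := Measure.AbsolutelyContinuous.mk fun E hE h0 => by
    rw [hνE E hE]
    exact Finset.sum_eq_zero fun s _ => (hτ.iterate s).2 E hE h0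
  have hfin : ∫⁻ x, ν.rnDeriv μ x ∂μ ≠ ⊤ := (Measure.lintegral_rnDeriv_lt_top ν μ).ne
  obtain ⟨δ, hδ, H⟩ := exists_pos_setLIntegral_lt_of_measure_lt hfin hε.ne'
  refine ⟨δ, hδ, fun E hE hlt => ?_⟩
  calc μ (⋃ s ∈ Finset.range (N + 1), τ^[s] ⁻¹' E)
      ≤ ∑ s ∈ Finset.range (N + 1), μ (τ^[s] ⁻¹' E) := measure_biUnion_finset_le _ _
    _ = ν E := (hνE E hE).symm
    _ = ∫⁻ x in E, ν.rnDeriv μ x ∂μ := (Measure.setLIntegral_rnDeriv hac E).symm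
    _ < ε := H E hlt

/-- Existence of a weakly wandering set: along a suitable strictly increasing sequence of times the
forward images of `B` are pairwise disjoint. -/
lemma exists_weaklyWandering [MeasurableSpace X] {μ : Measure X} [IsFiniteMeasure μ] {τ : X → X}
    (hτ : NonSingular μ τ) (hinj : Function.Injective τ) {A : Set X} (hA : MeasurableSet A)
    (hA0 : 0 < μ A) (hsmall : ∀ δ > 0, ∃ᶠ n in atTop, μ (τ^[n] ⁻¹' A) < δ) :
    ∃ B : Set X, MeasurableSet B ∧ 0 < μ B ∧ ∃ n : ℕ → ℕ, StrictMono n ∧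
      Pairwise (Function.onFun Disjoint fun j => τ^[n j] '' B) := by
  have hstep : ∀ (N : ℕ) (ε : ℝ≥0∞), 0 < ε → ∃ a : ℕ, 1 ≤ a ∧
      μ (⋃ s ∈ Finset.range (N + 1), τ^[a + s] ⁻¹' A) < ε := by
    intro N ε hε
    obtain ⟨δ, hδ, H⟩ := exists_delta hτ N hε
    obtain ⟨a, hlt, ha⟩ := ((hsmall δ hδ).and_eventually (eventually_ge_atTop 1)).exists
    refine ⟨a, ha, ?_⟩
    simpa only [← preimage_comp, ← Function.iterate_add] using H _ (hτ.1.iterate a hA) hlt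
  obtain ⟨ε, hε, hsum⟩ := ENNReal.exists_pos_sum_of_countable' hA0.ne' ℕ
  choose a ha1 ha using fun (N j : ℕ) => hstep N (ε j) (hε j)
  let n : ℕ → ℕ := fun j => Nat.rec 0 (fun j N => N + a N j) j
  have hn : ∀ j, n (j + 1) = n j + a (n j) j := fun j => rfl
  have hmono : StrictMono n := strictMono_nat_of_lt_succ fun j => by
    rw [hn]; have := ha1 (n j) j; omega
  -- `R j` collects the points entering `A` at some time `n (j + 1) - n i` with `i ≤ j`.
  let R : ℕ → Set X := fun j => ⋃ s ∈ Finset.range (n j + 1), τ^[a (n j) j + s] ⁻¹' A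
  have hRm : MeasurableSet (⋃ j, R j) :=
    MeasurableSet.iUnion fun j => Finset.measurableSet_biUnion _ fun s _ => hτ.1.iterate _ hA
  have hR : μ (⋃ j, R j) < μ A :=
    ((measure_iUnion_le R).trans (ENNReal.tsum_le_tsum fun j => (ha (n j) j).le)).trans_lt hsum
  have hdisj : ∀ i j, i < j → Disjoint (τ^[n i] '' (A \ ⋃ j, R j)) (τ^[n j] '' (A \ ⋃ j, R j)) := by
    intro i j hij
    obtain ⟨j, rfl⟩ : ∃ k, j = k + 1 := ⟨j - 1, by omega⟩
    rw [Set.disjoint_left]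
    rintro _ ⟨x, hx, rfl⟩ ⟨y, hy, hxy⟩
    have hle : n i ≤ n j := hmono.monotone (by omega)
    have hsplit : n (j + 1) = n i + (a (n j) j + (n j - n i)) := by rw [hn]; omega
    rw [hsplit, Function.iterate_add_apply] at hxy
    have hyx := hinj.iterate _ hxy
    refine hy.2 (mem_iUnion.2 ⟨j, mem_iUnion₂.2 ⟨n j - n i, ?_, ?_⟩⟩)
    · exact Finset.mem_range.2 (by omega)
    · rw [mem_preimage, hyx]; exact hx.1
  refine ⟨A \ ⋃ j, R j, hA.diff hRm, ?_, n, hmono, fun i j hij => ?_⟩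
  · exact (tsub_pos_of_lt hR).trans_le le_measure_sdiff
  · rcases lt_or_gt_of_ne hij with h | h
    · exact hdisj i j h
    · exact (hdisj j i h).symm

/-- Over a finite measure space, the limsup condition along preimages yields the limsup
condition along forward images for some set of finite positive measure. -/
theorem stmt_9 {X : Type*} [MeasurableSpace X] (μ : Measure X) [IsFiniteMeasure μ]
    (τ : X → X) (φ : ℝ≥0∞ → ℝ≥0∞) (h : ℝ → ℝ≥0∞)
    (hτ : NonSingular μ τ) (hinj : Function.Injective τ)
    (himg : ∀ B : Set X, MeasurableSet B → MeasurableSet (τ '' B))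
    (hφ : IsOrliczFunction φ) (hΔ : Delta2All φ) (hh : IsWeight μ h)
    (A : Set X) (hA : MeasurableSet A) (hA0 : 0 < μ A) (hAfin : μ A < ⊤)
    (hlim : Filter.limsup
        (fun n : ℕ => orliczInv φ (weightInt h (μ ((τ^[n]) ⁻¹' A)))⁻¹)
        Filter.atTop = ⊤) :
    ∃ B : Set X, MeasurableSet B ∧ 0 < μ B ∧ μ B < ⊤ ∧
      Filter.limsup
        (fun n : ℕ => orliczInv φ (weightInt h (μ ((τ^[n]) '' B)))⁻¹)
        Filter.atTop = ⊤ := by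
  obtain ⟨B, hB, hB0, n, hn, hdisj⟩ := exists_weaklyWandering hτ hinj hA hA0 fun δ hδ =>
    exists_small_of_limsup hφ hh (fun _ => measure_mono (subset_univ _)) hlim hδ
  have himgn : ∀ k, MeasurableSet (τ^[k] '' B) := by
    intro k
    induction k with
    | zero => simpa using hB
    | succ k ih => rw [Function.iterate_succ', image_comp]; exact himg _ ih
  refine ⟨B, hB, hB0, measure_lt_top μ B, ?_⟩
  refine limsup_eq_top_of_subseq hφ hΔ hh (fun _ => measure_mono (subset_univ _)) hn ?_
  have hsum : ∑' j, μ (τ^[n j] '' B) ≠ ⊤ := by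
    rw [← measure_iUnion hdisj fun j => himgn (n j)]
    exact measure_ne_top μ _
  exact ENNReal.tendsto_atTop_zero_of_tsum_ne_top hsum

end
end
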